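/- Fix integers n ≥ 1, s ≥ 0, r ≥ 1, δ ∈ {0,1,…,r}^{n−1}, and d_1, d_2 with d_1 > r(n−1) and d_2 > r(n−1). Then the extreme points of P^δ are exactly the points v(m, (m_1,…,m_{c(δ)})) for m ∈ {0,1,…,ℓ(δ)} and m_k ∈ {0,1,…,n_k(δ)}, where v(m,(m_k)) ∈ ℝ^{2n} is defined as follows: for every index j lying in one of the first m blocks, a_j = δ_1 + ⋯ + δ_{j−1}; for every index j lying in one of the remaining blocks, a_j = d_1 − (δ_j + ⋯ + δ_{n−1}); and for the k-th column C_k = {j, j+1, …, j'}, one has b_i = L_{C_k} + r(i−j) for i = j,…,j+m_k−1, and b_i = d_2 + s·a_j − R_{C_k} − r(j'−i) for i = j+m_k,…,j'. Moreover these (ℓ(δ)+1)·∏_{k=1}^{c(δ)}(n_k(δ)+1) points are pairwise distinct. -/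

import Mathlib

/-!
In the coordinates `x_j = a_j - (δ_1 + ⋯ + δ_{j-1})` and `y_i = b_i - (L_C + r (i - j))`, where
`C` is the column of `i` and `j` its first index, the polytope `P^δ` becomes (`mem_PdeltaR_iff`):
* `0 ≤ x_j ≤ D` with `D = d_1 - |δ| > 0`, where `x` is constant on blocks and weakly increasing;
* `0 ≤ y_i ≤ U_i` with `U_i = F_i + s x_i`, where `y` is weakly increasing on each column.
Here `F_i > 0` depends only on the column, because `L_C + R_C + r (|C| - 1) ≤ r (n - 1) < d_2`.
The points `v(m, (m_k))` become the points of this polytope with all `x_j ∈ {0, D}` and all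
`y_i ∈ {0, U_i}`: by monotonicity such a point is determined by the number of blocks where `x`
vanishes and, in each column, the number of indices where `y` vanishes (`isVtx_iff`).

Such points are extreme: writing one as a proper mixture forces first the `x`-coordinates and then
the `y`-coordinates of both points to agree with it (`extreme_of_isVtx`). Conversely
(`ends_of_extreme`), `u ± u (D - u) / D` are monotone self-maps of `[0, D]` averaging to the
identity, with exactly the ends as fixed points. Applying them to `x`, while rescaling each `y_i`
in proportion to `U_i`, writes any point as the midpoint of two points of the polytope, so an
extreme point has `x_j ∈ {0, D}`; the same maps on `[0, U_i]` applied to `y` give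
`y_i ∈ {0, U_i}`. Distinct parameters give distinct points since `D` and all `U_i` are positive.
-/

open Finset

noncomputable section

/-- Partial sums `δ_1 + ⋯ + δ_{j-1}` of the type vector `δ`. -/
def pSum (n r : ℕ) (δ : Fin (n - 1) → Fin (r + 1)) (j : Fin n) : ℤ :=
  ∑ i ∈ univ.filter (fun i : Fin (n - 1) => (i : ℕ) < (j : ℕ)), ((δ i : ℕ) : ℤ)

/-- `|δ| = δ_1 + ⋯ + δ_{n-1}`. -/
def delTotal (n r : ℕ) (δ : Fin (n - 1) → Fin (r + 1)) : ℤ := ∑ i, ((δ i : ℕ) : ℤ)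

/-- `ℓ(δ) = 1 + #{i | δ_i = r}`, the number of blocks. -/
def ellStat (n r : ℕ) (δ : Fin (n - 1) → Fin (r + 1)) : ℕ :=
  1 + (univ.filter (fun i : Fin (n - 1) => (δ i : ℕ) = r)).card

/-- The set of distinct values `a_1 < ⋯ < a_{c(δ)}` appearing in the list
`0, δ_1, δ_1+δ_2, …, δ_1+⋯+δ_{n-1}`. -/
def distinctVals (n r : ℕ) (δ : Fin (n - 1) → Fin (r + 1)) : Finset ℤ :=
  univ.image (pSum n r δ)

/-- `n_k(δ)`: the number of occurrences of the value `v = a_k` in the above list. -/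
def nOcc (n r : ℕ) (δ : Fin (n - 1) → Fin (r + 1)) (v : ℤ) : ℕ :=
  (univ.filter (fun j : Fin n => pSum n r δ j = v)).card

/-- `j` is the first index of its block: `j = 1` or `δ_{j-1} = r`. -/
def blockStart (n r : ℕ) (δ : Fin (n - 1) → Fin (r + 1)) (j : Fin n) : Prop :=
  ∀ hj : 0 < (j : ℕ), ((δ ⟨(j : ℕ) - 1, by have := j.isLt; omega⟩ : ℕ)) = r

/-- `j` is the first index of its column: `j = 1` or `δ_{j-1} ≠ 0`. -/
def colStart (n r : ℕ) (δ : Fin (n - 1) → Fin (r + 1)) (j : Fin n) : Prop :=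
  ∀ hj : 0 < (j : ℕ), ((δ ⟨(j : ℕ) - 1, by have := j.isLt; omega⟩ : ℕ)) ≠ 0

/-- The indices `{j, j+1, …, j'}` form a column of `δ`. -/
def IsColumn (n r : ℕ) (δ : Fin (n - 1) → Fin (r + 1)) (j j' : Fin n) : Prop :=
  j ≤ j' ∧ colStart n r δ j ∧
  (∀ k : Fin n, j ≤ k → k < j' → ∀ h : (k : ℕ) < n - 1, ((δ ⟨(k : ℕ), h⟩ : ℕ)) = 0) ∧
  (∀ h : (j' : ℕ) < n - 1, ((δ ⟨(j' : ℕ), h⟩ : ℕ)) ≠ 0)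

/-- `L_C = Σ_{i=1}^{j-1} max{r − (δ_i + ⋯ + δ_{j−1}), 0}` for the column with first
index `j`. -/
def Lstat (n r : ℕ) (δ : Fin (n - 1) → Fin (r + 1)) (j : Fin n) : ℤ :=
  ∑ i ∈ univ.filter (fun i : Fin n => i < j),
    max ((r : ℤ) - (pSum n r δ j - pSum n r δ i)) 0

/-- `R_C = Σ_{k=j'+1}^{n} max{r − (δ_{j'} + ⋯ + δ_{k−1}), 0}` for the column with last
index `j'`. -/
def Rstat (n r : ℕ) (δ : Fin (n - 1) → Fin (r + 1)) (j' : Fin n) : ℤ :=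
  ∑ k ∈ univ.filter (fun k : Fin n => j' < k),
    max ((r : ℤ) - (pSum n r δ k - pSum n r δ j')) 0

/-- The conditions defining the polytope `P^δ` (real version). -/
def PdeltaCondR (n r : ℕ) (s d1 d2 : ℤ) (δ : Fin (n - 1) → Fin (r + 1))
    (a b : Fin n → ℝ) : Prop :=
  (∀ h : 0 < n, 0 ≤ a ⟨0, h⟩) ∧
  (∀ p p' : Fin n, blockStart n r δ p → blockStart n r δ p' → p < p' →
      (∀ q : Fin n, p < q → q < p' → ¬ blockStart n r δ q) →
      a p + ((pSum n r δ p' - pSum n r δ p : ℤ) : ℝ) ≤ a p') ∧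
  (∀ p : Fin n, blockStart n r δ p → (∀ q : Fin n, p < q → ¬ blockStart n r δ q) →
      a p + ((delTotal n r δ - pSum n r δ p : ℤ) : ℝ) ≤ (d1 : ℝ)) ∧
  (∀ j : Fin n, ¬ blockStart n r δ j →
      ∀ i : Fin n, blockStart n r δ i → i < j →
        (∀ q : Fin n, blockStart n r δ q → q < j → q ≤ i) →
        a j = a i + ((pSum n r δ j - pSum n r δ i : ℤ) : ℝ)) ∧
  (∀ j j' : Fin n, IsColumn n r δ j j' →
      (((Lstat n r δ j : ℤ) : ℝ) ≤ b j ∧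
       (∀ k : Fin n, j ≤ k → k < j' → ∀ h : (k : ℕ) + 1 < n,
          b k + (r : ℝ) ≤ b ⟨(k : ℕ) + 1, h⟩) ∧
       b j' ≤ (d2 : ℝ) + (s : ℝ) * a j - ((Rstat n r δ j' : ℤ) : ℝ)))

/-- The polytope `P^δ ⊆ ℝ^{2n}`, where a point of `ℝ^{2n}` is a pair of functions
`Fin n → ℝ` (the `a`- and `b`-coordinates). -/
def PdeltaR (n r : ℕ) (s d1 d2 : ℤ) (δ : Fin (n - 1) → Fin (r + 1)) :
    Set ((Fin n → ℝ) × (Fin n → ℝ)) :=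
  {p | PdeltaCondR n r s d1 d2 δ p.1 p.2}


/-- The number of the block containing `j` (1-based): `j` lies in the `blockNum j`-th
block. -/
def blockNum (n r : ℕ) (δ : Fin (n - 1) → Fin (r + 1)) (j : Fin n) : ℕ :=
  1 + (univ.filter (fun i : Fin (n - 1) => (i : ℕ) < (j : ℕ) ∧ ((δ i : ℕ)) = r)).card

/-- Validity of a choice `w` of the numbers `m_k` for the columns: `w` is supported on the
first indices of columns, and `w j ≤ |C|` for the column `C` starting at `j`. -/
def ValidW (n r : ℕ) (δ : Fin (n - 1) → Fin (r + 1)) (w : Fin n → ℕ) : Prop :=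
  (∀ j j' : Fin n, IsColumn n r δ j j' → w j ≤ (j' : ℕ) - (j : ℕ) + 1) ∧
  (∀ j : Fin n, ¬ colStart n r δ j → w j = 0)

/-- `p` is the point `v(m, (m_k))`: for `j` in one of the first `m` blocks,
`a_j = δ_1 + ⋯ + δ_{j−1}`; for `j` in one of the remaining blocks,
`a_j = d_1 − (δ_j + ⋯ + δ_{n−1})`; and in the column `C_k = {j,…,j'}` (with `m_k = w j`)
the first `m_k` points satisfy `b_i = L_{C_k} + r(i−j)` and the remaining ones
`b_i = d_2 + s·a_j − R_{C_k} − r(j'−i)`. -/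
def IsVtx (n r : ℕ) (s d1 d2 : ℤ) (δ : Fin (n - 1) → Fin (r + 1)) (m : ℕ) (w : Fin n → ℕ)
    (p : (Fin n → ℝ) × (Fin n → ℝ)) : Prop :=
  (∀ j : Fin n,
    (blockNum n r δ j ≤ m → p.1 j = ((pSum n r δ j : ℤ) : ℝ)) ∧
    (m < blockNum n r δ j →
      p.1 j = (d1 : ℝ) - ((delTotal n r δ - pSum n r δ j : ℤ) : ℝ))) ∧
  (∀ j j' : Fin n, IsColumn n r δ j j' →
    ∀ i : Fin n, j ≤ i → i ≤ j' →
      ((i : ℕ) < (j : ℕ) + w j →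
        p.2 i = ((Lstat n r δ j : ℤ) : ℝ) + (r : ℝ) * (((i : ℕ) : ℝ) - ((j : ℕ) : ℝ))) ∧
      ((j : ℕ) + w j ≤ (i : ℕ) →
        p.2 i = (d2 : ℝ) + (s : ℝ) * p.1 j - ((Rstat n r δ j' : ℤ) : ℝ)
          - (r : ℝ) * (((j' : ℕ) : ℝ) - ((i : ℕ) : ℝ))))

/-! ### Partial sums, blocks and columns -/

section Combinatorics

variable {n r : ℕ} {δ : Fin (n - 1) → Fin (r + 1)}

/-- Upward induction along `Fin n` starting from `i`. -/
lemma fin_le_induction {P : Fin n → Prop} (i : Fin n) (h0 : P i)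
    (hs : ∀ (k : ℕ) (h : k + 1 < n), i ≤ ⟨k, by omega⟩ → P ⟨k, by omega⟩ → P ⟨k + 1, h⟩)
    (j : Fin n) (hij : i ≤ j) : P j := by
  obtain ⟨j, hj⟩ := j
  induction j with
  | zero =>
    have : i = ⟨0, hj⟩ := le_antisymm hij (Fin.mk_le_of_le_val (Nat.zero_le _))
    exact this ▸ h0
  | succ k ih =>
    rcases hij.eq_or_lt with h | h
    · exact h ▸ h0
    · have h' : i ≤ ⟨k, by omega⟩ := by
        rw [Fin.lt_def] at h
        rw [Fin.le_def]
        exact Nat.lt_succ_iff.mp h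
      exact hs k hj h' (ih _ h')

lemma pSum_zero (h : 0 < n) : pSum n r δ ⟨0, h⟩ = 0 := by
  simp [pSum]

lemma filter_lt_succ (k : ℕ) (h : k + 1 < n) :
    (univ.filter fun i : Fin (n - 1) => (i : ℕ) < k + 1) =
      insert ⟨k, by omega⟩ (univ.filter fun i : Fin (n - 1) => (i : ℕ) < k) := by
  ext i
  simp only [mem_filter, mem_univ, true_and, mem_insert, Fin.ext_iff]
  omega

lemma pSum_succ (k : ℕ) (h : k + 1 < n) :
    pSum n r δ ⟨k + 1, h⟩ = pSum n r δ ⟨k, by omega⟩ + ((δ ⟨k, by omega⟩ : ℕ) : ℤ) := by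
  unfold pSum
  simp only [filter_lt_succ k h]
  rw [sum_insert (by simp), add_comm]

lemma blockNum_succ (k : ℕ) (h : k + 1 < n) :
    blockNum n r δ ⟨k + 1, h⟩ =
      blockNum n r δ ⟨k, by omega⟩ + if (δ ⟨k, by omega⟩ : ℕ) = r then 1 else 0 := by
  unfold blockNum
  simp only [← filter_filter, filter_lt_succ k h, filter_insert]
  split_ifs with h1
  · rw [card_insert_of_notMem (by simp)]
    omega
  · omega

lemma pSum_mono : Monotone (pSum n r δ) := fun i j hij =>
  fin_le_induction (P := fun j => pSum n r δ i ≤ pSum n r δ j) i le_rfl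
    (fun k h _ ih => by rw [pSum_succ k h]; omega) j hij

lemma blockNum_mono : Monotone (blockNum n r δ) := fun i j hij =>
  fin_le_induction (P := fun j => blockNum n r δ i ≤ blockNum n r δ j) i le_rfl
    (fun k h _ ih => by rw [blockNum_succ k h]; omega) j hij

lemma pSum_nonneg (j : Fin n) : 0 ≤ pSum n r δ j :=
  sum_nonneg fun _ _ => by positivity

lemma delTotal_eq (hn : 0 < n) : delTotal n r δ = pSum n r δ ⟨n - 1, by omega⟩ := by
  unfold delTotal pSum
  congr 1
  ext i
  simp

lemma delTotal_le (hn : 1 ≤ n) : delTotal n r δ ≤ (r : ℤ) * ((n : ℤ) - 1) := by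
  have h : delTotal n r δ ≤ ∑ _i : Fin (n - 1), (r : ℤ) :=
    sum_le_sum fun i _ => by have := (δ i).isLt; omega
  have h2 : ((n - 1 : ℕ) : ℤ) = (n : ℤ) - 1 := by omega
  rw [sum_const, card_univ, Fintype.card_fin, nsmul_eq_mul, h2] at h
  linarith

lemma blockNum_pos (j : Fin n) : 1 ≤ blockNum n r δ j := by
  unfold blockNum; omega

lemma blockNum_le_ellStat (j : Fin n) : blockNum n r δ j ≤ ellStat n r δ := by
  unfold blockNum ellStat
  gcongr with i
  exact fun h => h.2

lemma blockNum_last (hn : 0 < n) : blockNum n r δ ⟨n - 1, by omega⟩ = ellStat n r δ := by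
  unfold blockNum ellStat
  congr 2
  ext i
  simp

lemma exists_blockNum_eq (hn : 0 < n) (m : ℕ) (h1 : 1 ≤ m) (h2 : m ≤ ellStat n r δ) :
    ∃ j : Fin n, blockNum n r δ j = m := by
  rw [← blockNum_last hn] at h2
  refine fin_le_induction (P := fun j => m ≤ blockNum n r δ j → ∃ j : Fin n, blockNum n r δ j = m)
    ⟨0, hn⟩ ?_ ?_ ⟨n - 1, by omega⟩ (by simp [Fin.le_def]) h2
  · intro h
    refine ⟨⟨0, hn⟩, le_antisymm ?_ h⟩
    simpa [blockNum] using h1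
  · intro k h _ ih hm
    by_cases hk : m ≤ blockNum n r δ ⟨k, by omega⟩
    · exact ih hk
    · refine ⟨_, le_antisymm ?_ hm⟩
      rw [blockNum_succ k h]
      split_ifs <;> omega

lemma blockStart_zero (h : 0 < n) : blockStart n r δ ⟨0, h⟩ := fun h => absurd h (by simp)

lemma blockStart_succ (k : ℕ) (h : k + 1 < n) :
    blockStart n r δ ⟨k + 1, h⟩ ↔ (δ ⟨k, by omega⟩ : ℕ) = r := by
  simp [blockStart]

/-- Every index lies weakly after the start of its block, which is the last block start
not exceeding it. -/
lemma exists_lastBlockStart (j : Fin n) :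
    ∃ i ≤ j, blockStart n r δ i ∧ ∀ q, blockStart n r δ q → q ≤ j → q ≤ i := by
  classical
  have hn : 0 < n := by have := j.isLt; omega
  obtain ⟨i, hi, hmax⟩ := (univ.filter fun q => blockStart n r δ q ∧ q ≤ j).exists_max_image id
    ⟨⟨0, hn⟩, mem_filter.2 ⟨mem_univ _, blockStart_zero hn, Nat.zero_le _⟩⟩
  simp only [mem_filter, mem_univ, true_and, id] at hi hmax
  exact ⟨i, hi.2, hi.1, fun q h1 h2 => hmax q ⟨h1, h2⟩⟩

lemma blockNum_eq_of_no_start (i j : Fin n) (hij : i ≤ j)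
    (h : ∀ q, i < q → q ≤ j → ¬ blockStart n r δ q) : blockNum n r δ i = blockNum n r δ j := by
  refine fin_le_induction
    (P := fun j => (∀ q, i < q → q ≤ j → ¬ blockStart n r δ q) →
      blockNum n r δ i = blockNum n r δ j) i (fun _ => rfl) ?_ j hij h
  intro k hk hik ih hq
  have h1 := hq ⟨k + 1, hk⟩ (by rw [Fin.lt_def]; rw [Fin.le_def] at hik; simp at hik ⊢; omega) le_rfl
  rw [blockStart_succ] at h1
  rw [blockNum_succ k hk, if_neg h1, ih]
  · rfl
  · exact fun q h2 h3 => hq q h2 (h3.trans (by simp [Fin.le_def]))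

lemma blockNum_eq_of_pSum_eq (hr : 1 ≤ r) (i j : Fin n) (h : pSum n r δ i = pSum n r δ j) :
    blockNum n r δ i = blockNum n r δ j := by
  wlog hij : i ≤ j
  · exact (this hr j i h.symm (le_of_not_ge hij)).symm
  refine fin_le_induction
    (P := fun j => pSum n r δ i = pSum n r δ j →
      blockNum n r δ i = blockNum n r δ j) i (fun _ => rfl) ?_ j hij h
  intro k hk hik ih hq
  have h1 := pSum_mono (δ := δ) hik
  rw [pSum_succ k hk] at hq
  rw [blockNum_succ k hk, if_neg (by omega), ih (by omega)]
  rfl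

/-- First index of the column of `i`; columns are the level sets of the partial sums. -/
def colFirst (n r : ℕ) (δ : Fin (n - 1) → Fin (r + 1)) (i : Fin n) : Fin n :=
  (univ.filter fun k => pSum n r δ k = pSum n r δ i).min' ⟨i, by simp⟩

/-- Last index of the column of `i`. -/
def colLast (n r : ℕ) (δ : Fin (n - 1) → Fin (r + 1)) (i : Fin n) : Fin n :=
  (univ.filter fun k => pSum n r δ k = pSum n r δ i).max' ⟨i, by simp⟩

lemma pSum_colFirst (i : Fin n) : pSum n r δ (colFirst n r δ i) = pSum n r δ i := by
  have := min'_mem (univ.filter fun k => pSum n r δ k = pSum n r δ i) ⟨i, by simp⟩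
  exact (mem_filter.mp this).2

lemma pSum_colLast (i : Fin n) : pSum n r δ (colLast n r δ i) = pSum n r δ i := by
  have := max'_mem (univ.filter fun k => pSum n r δ k = pSum n r δ i) ⟨i, by simp⟩
  exact (mem_filter.mp this).2

lemma colFirst_le {i k : Fin n} (h : pSum n r δ k = pSum n r δ i) : colFirst n r δ i ≤ k :=
  min'_le _ _ (by simpa using h)

lemma le_colLast {i k : Fin n} (h : pSum n r δ k = pSum n r δ i) : k ≤ colLast n r δ i :=
  le_max' _ _ (by simpa using h)

lemma colFirst_congr {i k : Fin n} (h : pSum n r δ k = pSum n r δ i) :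
    colFirst n r δ k = colFirst n r δ i :=
  le_antisymm (colFirst_le ((pSum_colFirst i).trans h.symm))
    (colFirst_le ((pSum_colFirst k).trans h))

lemma colLast_congr {i k : Fin n} (h : pSum n r δ k = pSum n r δ i) :
    colLast n r δ k = colLast n r δ i :=
  le_antisymm (le_colLast ((pSum_colLast k).trans h))
    (le_colLast ((pSum_colLast i).trans h.symm))

lemma colStart_iff (j : Fin n) : colStart n r δ j ↔ colFirst n r δ j = j := by
  obtain ⟨j, hj⟩ := j
  cases j with
  | zero =>
    refine iff_of_true (fun h => absurd h (by simp)) ?_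
    exact le_antisymm (colFirst_le rfl) (by simp [Fin.le_def])
  | succ k =>
    have hs := pSum_succ (δ := δ) k hj
    have h1 : colStart n r δ ⟨k + 1, hj⟩ ↔ (δ ⟨k, by omega⟩ : ℕ) ≠ 0 := by simp [colStart]
    rw [h1]
    constructor
    · intro h
      refine le_antisymm (colFirst_le rfl) ?_
      by_contra hlt
      have h2 : colFirst n r δ ⟨k + 1, hj⟩ ≤ ⟨k, by omega⟩ := by
        rw [not_le, Fin.lt_def] at hlt
        rw [Fin.le_def]
        exact Nat.lt_succ_iff.mp hlt
      have h3 := pSum_mono (δ := δ) h2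
      rw [pSum_colFirst] at h3
      omega
    · intro h h0
      have h2 : colFirst n r δ ⟨k + 1, hj⟩ ≤ ⟨k, by omega⟩ := colFirst_le (by rw [hs, h0]; simp)
      rw [h, Fin.le_def] at h2
      simp at h2

lemma colEnd_iff (j : Fin n) :
    (∀ h : (j : ℕ) < n - 1, (δ ⟨(j : ℕ), h⟩ : ℕ) ≠ 0) ↔ colLast n r δ j = j := by
  obtain ⟨k, hk⟩ := j
  constructor
  · intro h
    refine le_antisymm ?_ (le_colLast rfl)
    by_contra hlt
    have h2 : k + 1 ≤ (colLast n r δ ⟨k, hk⟩ : ℕ) := by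
      rw [not_le, Fin.lt_def] at hlt
      exact hlt
    have h4 := (colLast n r δ ⟨k, hk⟩).isLt
    have h3 := pSum_mono (δ := δ) (a := ⟨k + 1, by omega⟩) (b := colLast n r δ ⟨k, hk⟩) h2
    rw [pSum_colLast, pSum_succ] at h3
    have : (δ ⟨k, by omega⟩ : ℕ) ≠ 0 := h (by simp; omega)
    omega
  · intro h hk' h0
    simp only at hk'
    have h2 : (⟨k + 1, by omega⟩ : Fin n) ≤ colLast n r δ ⟨k, hk⟩ :=
      le_colLast (by rw [pSum_succ]; simp only at h0; rw [h0]; simp)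
    rw [h, Fin.le_def] at h2
    simp at h2

lemma pSum_eq_iff_zeros {j j' : Fin n} (hjj : j ≤ j') :
    (∀ k : Fin n, j ≤ k → k < j' → ∀ h : (k : ℕ) < n - 1, (δ ⟨(k : ℕ), h⟩ : ℕ) = 0) ↔
      pSum n r δ j' = pSum n r δ j := by
  constructor
  · refine fin_le_induction (P := fun j' =>
      (∀ k : Fin n, j ≤ k → k < j' → ∀ h : (k : ℕ) < n - 1, (δ ⟨(k : ℕ), h⟩ : ℕ) = 0) →
      pSum n r δ j' = pSum n r δ j) j (fun _ => rfl) ?_ j' hjj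
    intro k hk hjk ih h
    rw [pSum_succ k hk, ih fun q h1 h2 => h q h1 (h2.trans (by simp [Fin.lt_def])),
      h ⟨k, by omega⟩ hjk (by simp [Fin.lt_def])]
    simp
  · intro h k hjk hkj hk
    have h1 := pSum_mono (δ := δ) hjk
    have h3 := pSum_succ (δ := δ) k (by omega)
    have h2 := pSum_mono (δ := δ) (a := ⟨k + 1, by omega⟩) (b := j') hkj
    simp only [Fin.eta] at h3
    omega

lemma isColumn_iff (j j' : Fin n) :
    IsColumn n r δ j j' ↔ colFirst n r δ j = j ∧ colLast n r δ j = j' := by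
  unfold IsColumn
  rw [colStart_iff, colEnd_iff]
  constructor
  · rintro ⟨h1, h2, h3, h4⟩
    rw [pSum_eq_iff_zeros h1] at h3
    exact ⟨h2, by rw [← colLast_congr h3, h4]⟩
  · rintro ⟨h2, rfl⟩
    have h1 : j ≤ colLast n r δ j := le_colLast rfl
    exact ⟨h1, h2, (pSum_eq_iff_zeros h1).2 (pSum_colLast j), colLast_congr (pSum_colLast j)⟩

lemma isColumn_of (i : Fin n) : IsColumn n r δ (colFirst n r δ i) (colLast n r δ i) :=
  (isColumn_iff _ _).2 ⟨colFirst_congr (pSum_colFirst i), colLast_congr (pSum_colFirst i)⟩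

lemma IsColumn.pSum_eq {j j' i : Fin n} (h : IsColumn n r δ j j') (h1 : j ≤ i) (h2 : i ≤ j') :
    pSum n r δ i = pSum n r δ j := by
  obtain ⟨-, rfl⟩ := (isColumn_iff _ _).1 h
  have h3 := pSum_mono (δ := δ) h2
  rw [pSum_colLast] at h3
  exact le_antisymm h3 (pSum_mono h1)

lemma IsColumn.first_eq {j j' i : Fin n} (h : IsColumn n r δ j j') (h1 : j ≤ i) (h2 : i ≤ j') :
    colFirst n r δ i = j :=
  (colFirst_congr (h.pSum_eq h1 h2)).trans ((isColumn_iff _ _).1 h).1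

lemma IsColumn.last_eq {j j' i : Fin n} (h : IsColumn n r δ j j') (h1 : j ≤ i) (h2 : i ≤ j') :
    colLast n r δ i = j' :=
  (colLast_congr (h.pSum_eq h1 h2)).trans ((isColumn_iff _ _).1 h).2

lemma Lstat_le (j : Fin n) : Lstat n r δ j ≤ r * (j : ℕ) := by
  unfold Lstat
  have h : ∀ i ∈ univ.filter (fun i : Fin n => i < j),
      max ((r : ℤ) - (pSum n r δ j - pSum n r δ i)) 0 ≤ r := fun i hi => by
    have := pSum_mono (δ := δ) (mem_filter.1 hi).2.le
    exact max_le (by omega) (by positivity)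
  refine (sum_le_card_nsmul _ _ _ h).trans (le_of_eq ?_)
  have h2 : (univ.filter fun i : Fin n => i < j) = Iio j := by ext; simp
  rw [h2, Fin.card_Iio, nsmul_eq_mul, mul_comm]

lemma Rstat_le (j : Fin n) : Rstat n r δ j ≤ r * ((n : ℤ) - 1 - (j : ℕ)) := by
  unfold Rstat
  have h : ∀ i ∈ univ.filter (fun i : Fin n => j < i),
      max ((r : ℤ) - (pSum n r δ i - pSum n r δ j)) 0 ≤ r := fun i hi => by
    have := pSum_mono (δ := δ) (mem_filter.1 hi).2.le
    exact max_le (by omega) (by positivity)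
  refine (sum_le_card_nsmul _ _ _ h).trans (le_of_eq ?_)
  have h2 : (univ.filter fun i : Fin n => j < i) = Ioi j := by ext; simp
  have h3 : ((n - 1 - (j : ℕ) : ℕ) : ℤ) = (n : ℤ) - 1 - (j : ℕ) := by have := j.isLt; omega
  rw [h2, Fin.card_Ioi, nsmul_eq_mul, mul_comm, h3]

end Combinatorics

/-! ### A normal form of the polytope -/

section NormalForm

variable {n : ℕ}

/-- Inequalities defining `P^δ` in the coordinates `x_j = a_j - (δ_1 + ⋯ + δ_{j-1})` and
`y_i = b_i -` (lowest possible value). Here `B` is the block number, columns are the level sets of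
`S`, `D` is the range of `x`, and `F i + s * x i` is the range of `y i`. -/
structure NormalCond (B : Fin n → ℕ) (S : Fin n → ℤ) (D s : ℝ) (F : Fin n → ℝ)
    (x y : Fin n → ℝ) : Prop where
  x_nonneg : ∀ j, 0 ≤ x j
  x_le : ∀ j, x j ≤ D
  x_mono : ∀ i j, B i ≤ B j → x i ≤ x j
  y_nonneg : ∀ i, 0 ≤ y i
  y_le : ∀ i, y i ≤ F i + s * x i
  y_mono : ∀ i j, S i = S j → i ≤ j → y i ≤ y j

/-- The parabola `u (D - u) / D`, which vanishes exactly at the ends of `[0, D]` and whose slope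
on `[0, D]` is at most `1` in absolute value. Hence `u + e * bump D u` with `|e| ≤ 1` is a monotone
self-map of `[0, D]`. -/
def bump (D u : ℝ) : ℝ := u * (D - u) / D

lemma bump_mono {D u v e : ℝ} (hD : 0 < D) (hu : 0 ≤ u) (huv : u ≤ v) (hv : v ≤ D)
    (he : |e| ≤ 1) : u + e * bump D u ≤ v + e * bump D v := by
  have key : v + e * bump D v - (u + e * bump D u) = (v - u) * (D + e * (D - u - v)) / D := by
    unfold bump; field_simp; ring
  have h1 : |e * (D - u - v)| ≤ D := by
    rw [abs_mul]
    have : |D - u - v| ≤ D := abs_le.2 ⟨by linarith, by linarith⟩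
    nlinarith [abs_nonneg e, abs_nonneg (D - u - v)]
  have h2 : 0 ≤ (v - u) * (D + e * (D - u - v)) / D :=
    div_nonneg (mul_nonneg (by linarith) (by linarith [(abs_le.1 h1).1])) hD.le
  linarith

lemma bump_nonneg {D u e : ℝ} (hD : 0 < D) (hu : 0 ≤ u) (hv : u ≤ D) (he : |e| ≤ 1) :
    0 ≤ u + e * bump D u := by
  simpa [bump] using bump_mono hD le_rfl hu hv he

lemma bump_le {D u e : ℝ} (hD : 0 < D) (hu : 0 ≤ u) (hv : u ≤ D) (he : |e| ≤ 1) :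
    u + e * bump D u ≤ D := by
  simpa [bump] using bump_mono hD hu hv le_rfl he

lemma eq_or_eq_of_bump {D u : ℝ} (hD : 0 < D) (h : bump D u = 0) : u = 0 ∨ u = D := by
  unfold bump at h
  rcases div_eq_zero_iff.1 h with h | h
  · rcases mul_eq_zero.1 h with h | h
    · exact Or.inl h
    · exact Or.inr (by linarith)
  · exact absurd h hD.ne'

variable {B : Fin n → ℕ} {S : Fin n → ℤ} {D s : ℝ} {F : Fin n → ℝ} {x y : Fin n → ℝ}

lemma NormalCond.range_pos (h : NormalCond B S D s F x y) (hs : 0 ≤ s) (hF : ∀ i, 0 < F i)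
    (i : Fin n) : 0 < F i + s * x i := by
  have := mul_nonneg hs (h.x_nonneg i)
  linarith [hF i]

lemma NormalCond.x_eq (h : NormalCond B S D s F x y) (hSB : ∀ i j, S i = S j → B i = B j)
    {i j : Fin n} (hij : S i = S j) : x i = x j :=
  le_antisymm (h.x_mono _ _ (hSB _ _ hij).le) (h.x_mono _ _ (hSB _ _ hij).ge)

/-- Moving the `x`-coordinates by `bump` and rescaling each `y i` in proportion to its range
stays inside the polytope. -/
lemma NormalCond.perturb_x (h : NormalCond B S D s F x y) (hD : 0 < D) (hs : 0 ≤ s)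
    (hF : ∀ i, 0 < F i) (hSB : ∀ i j, S i = S j → B i = B j) (hSF : ∀ i j, S i = S j → F i = F j)
    {e : ℝ} (he : |e| ≤ 1) :
    NormalCond B S D s F (fun j => x j + e * bump D (x j))
      (fun i => y i + e * (y i * (s * bump D (x i)) / (F i + s * x i))) := by
  have hy : ∀ i, y i + e * (y i * (s * bump D (x i)) / (F i + s * x i)) =
      y i * ((F i + s * (x i + e * bump D (x i))) / (F i + s * x i)) := fun i => by
    have := (h.range_pos hs hF i).ne'
    field_simp
    ring
  have hpos : ∀ i, 0 ≤ F i + s * (x i + e * bump D (x i)) := fun i => by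
    have := mul_nonneg hs (bump_nonneg hD (h.x_nonneg i) (h.x_le i) he)
    linarith [hF i]
  have hq : ∀ i, 0 ≤ (F i + s * (x i + e * bump D (x i))) / (F i + s * x i) := fun i =>
    div_nonneg (hpos i) (h.range_pos hs hF i).le
  refine ⟨fun j => bump_nonneg hD (h.x_nonneg j) (h.x_le j) he,
    fun j => bump_le hD (h.x_nonneg j) (h.x_le j) he,
    fun i j hij => bump_mono hD (h.x_nonneg i) (h.x_mono i j hij) (h.x_le j) he,
    fun i => ?_, fun i => ?_, fun i j hij hle => ?_⟩
  · simp only [hy]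
    exact mul_nonneg (h.y_nonneg i) (hq i)
  · simp only [hy]
    refine (mul_le_mul_of_nonneg_right (h.y_le i) (hq i)).trans_eq ?_
    have := (h.range_pos hs hF i).ne'
    field_simp
  · simp only [hy]
    rw [h.x_eq hSB hij, hSF i j hij]
    exact mul_le_mul_of_nonneg_right (h.y_mono i j hij hle) (hq j)

lemma NormalCond.perturb_y (h : NormalCond B S D s F x y) (hs : 0 ≤ s)
    (hF : ∀ i, 0 < F i) (hSB : ∀ i j, S i = S j → B i = B j) (hSF : ∀ i j, S i = S j → F i = F j)
    {e : ℝ} (he : |e| ≤ 1) :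
    NormalCond B S D s F x (fun i => y i + e * bump (F i + s * x i) (y i)) := by
  refine ⟨h.x_nonneg, h.x_le, h.x_mono,
    fun i => bump_nonneg (h.range_pos hs hF i) (h.y_nonneg i) (h.y_le i) he,
    fun i => bump_le (h.range_pos hs hF i) (h.y_nonneg i) (h.y_le i) he, fun i j hij hle => ?_⟩
  rw [h.x_eq hSB hij, hSF i j hij]
  exact bump_mono (h.range_pos hs hF j) (h.y_nonneg i) (h.y_mono i j hij hle) (h.y_le j) he

/-- An extreme point admits no symmetric segment around it. -/
lemma eq_zero_of_mem_extremePoints {E : Type*} [AddCommGroup E] [Module ℝ E] {A : Set E} {p v : E}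
    (hp : p ∈ A.extremePoints ℝ) (h1 : p + v ∈ A) (h2 : p - v ∈ A) : v = 0 := by
  have := hp.2 h1 h2 ⟨1 / 2, 1 / 2, by norm_num, by norm_num, by norm_num, by module⟩
  simpa using this

/-- A point of an interval mixed from two points is an endpoint only if both agree with it. -/
lemma eq_of_mix {U u v t t' z : ℝ} (ht : 0 < t) (ht' : 0 < t') (htt : t + t' = 1)
    (hu : 0 ≤ u) (hu' : u ≤ U) (hv : 0 ≤ v) (hv' : v ≤ U) (hz : t * u + t' * v = z)
    (h : z = 0 ∨ z = U) : u = z ∧ v = z := by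
  obtain rfl : t' = 1 - t := by linarith
  rcases h with h | h
  · have h1 := mul_nonneg ht.le hu
    have h2 := mul_nonneg ht'.le hv
    have h3 : t * u = 0 := by linarith
    have h4 : (1 - t) * v = 0 := by linarith
    rw [h]
    exact ⟨(mul_eq_zero.1 h3).resolve_left ht.ne', (mul_eq_zero.1 h4).resolve_left ht'.ne'⟩
  · have h1 := mul_nonneg ht.le (sub_nonneg.2 hu')
    have h2 := mul_nonneg ht'.le (sub_nonneg.2 hv')
    have h3 : t * (U - u) = 0 := by linarith
    have h4 : (1 - t) * (U - v) = 0 := by linarith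
    have h5 := (mul_eq_zero.1 h3).resolve_left ht.ne'
    have h6 := (mul_eq_zero.1 h4).resolve_left ht'.ne'
    exact ⟨by linarith, by linarith⟩

end NormalForm

section Translation

variable {n r : ℕ} {δ : Fin (n - 1) → Fin (r + 1)} {s d1 d2 : ℤ}

/-- The least value of `b_i` on `P^δ`. -/
def lowB (n r : ℕ) (δ : Fin (n - 1) → Fin (r + 1)) (i : Fin n) : ℝ :=
  ((Lstat n r δ (colFirst n r δ i) : ℤ) : ℝ)
    + (r : ℝ) * (((i : ℕ) : ℝ) - ((colFirst n r δ i : ℕ) : ℝ))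

/-- The length of the range of `b_i` on the face of `P^δ` where `a_i = δ_1 + ⋯ + δ_{i-1}`. -/
def colGap (n r : ℕ) (s d2 : ℤ) (δ : Fin (n - 1) → Fin (r + 1)) (i : Fin n) : ℝ :=
  (d2 : ℝ) + s * pSum n r δ i - Rstat n r δ (colLast n r δ i)
    - Lstat n r δ (colFirst n r δ i)
    - r * (((colLast n r δ i : ℕ) : ℝ) - ((colFirst n r δ i : ℕ) : ℝ))

/-- The conditions `NormalCond` with the data of `δ`. -/
abbrev NormalP (n r : ℕ) (s d1 d2 : ℤ) (δ : Fin (n - 1) → Fin (r + 1)) (x y : Fin n → ℝ) : Prop :=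
  NormalCond (blockNum n r δ) (pSum n r δ) ((d1 : ℝ) - delTotal n r δ) s (colGap n r s d2 δ) x y

lemma colGap_pos (hs : 0 ≤ s) (hd2 : (r : ℤ) * ((n : ℤ) - 1) < d2) (i : Fin n) :
    0 < colGap n r s d2 δ i := by
  have h1 := Lstat_le (δ := δ) (colFirst n r δ i)
  have h2 := Rstat_le (δ := δ) (colLast n r δ i)
  have h3 := mul_nonneg hs (pSum_nonneg (δ := δ) i)
  have h : 0 < d2 + s * pSum n r δ i - Rstat n r δ (colLast n r δ i)
      - Lstat n r δ (colFirst n r δ i)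
      - r * (((colLast n r δ i : ℕ) : ℤ) - ((colFirst n r δ i : ℕ) : ℤ)) := by
    nlinarith
  unfold colGap
  exact_mod_cast h

lemma colGap_congr (i j : Fin n) (h : pSum n r δ i = pSum n r δ j) :
    colGap n r s d2 δ i = colGap n r s d2 δ j := by
  unfold colGap
  rw [colFirst_congr h, colLast_congr h, h]

lemma xRange_pos (hn : 1 ≤ n) (hd1 : (r : ℤ) * ((n : ℤ) - 1) < d1) :
    0 < (d1 : ℝ) - delTotal n r δ := by
  have := delTotal_le (r := r) (δ := δ) hn
  have h : 0 < d1 - delTotal n r δ := by omega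
  exact_mod_cast h

/-- Block conditions make `a_j - (δ_1 + ⋯ + δ_{j-1})` constant on blocks and weakly increasing. -/
lemma step_of_cond {a b : Fin n → ℝ} (h : PdeltaCondR n r s d1 d2 δ a b) (k : ℕ) (hk : k + 1 < n) :
    a ⟨k, by omega⟩ - pSum n r δ ⟨k, by omega⟩ ≤ a ⟨k + 1, hk⟩ - pSum n r δ ⟨k + 1, hk⟩ ∧
    ((δ ⟨k, by omega⟩ : ℕ) ≠ r →
      a ⟨k, by omega⟩ - pSum n r δ ⟨k, by omega⟩ = a ⟨k + 1, hk⟩ - pSum n r δ ⟨k + 1, hk⟩) := by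
  obtain ⟨-, h2, -, h4, -⟩ := h
  obtain ⟨i, hik, hi, hmax⟩ := exists_lastBlockStart (r := r) (δ := δ) ⟨k, by omega⟩
  have hcur : a ⟨k, by omega⟩ - pSum n r δ ⟨k, by omega⟩ = a i - pSum n r δ i := by
    by_cases hb : blockStart n r δ ⟨k, by omega⟩
    · rw [le_antisymm hik (hmax _ hb le_rfl)]
    · have hne : i ≠ ⟨k, by omega⟩ := fun he => hb (he ▸ hi)
      have := h4 _ hb i hi (lt_of_le_of_ne hik hne) fun q h5 h6 => hmax q h5 h6.le
      rw [this]; push_cast; ring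
  have hlt : i < ⟨k + 1, hk⟩ := lt_of_le_of_lt hik (by simp [Fin.lt_def])
  have hle : ∀ q : Fin n, q < ⟨k + 1, hk⟩ → q ≤ ⟨k, by omega⟩ := fun q hq => by
    rw [Fin.lt_def] at hq; rw [Fin.le_def]; simp at hq ⊢; omega
  by_cases hb : blockStart n r δ ⟨k + 1, hk⟩
  · refine ⟨?_, fun h => absurd ((blockStart_succ k hk).1 hb) h⟩
    have := h2 i _ hi hb hlt fun q h5 h6 h7 => absurd (hmax q h7 (hle q h6)) (not_le.2 h5)
    rw [hcur]; push_cast at this; linarith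
  · have := h4 _ hb i hi hlt fun q h5 h6 => hmax q h5 (hle q h6)
    push_cast at this
    exact ⟨by linarith, fun _ => by linarith⟩

lemma normal_of_cond (hr : 1 ≤ r) {a b : Fin n → ℝ} (h : PdeltaCondR n r s d1 d2 δ a b) :
    NormalP n r s d1 d2 δ (fun j => a j - pSum n r δ j) (fun i => b i - lowB n r δ i) := by
  have hmono : ∀ i j : Fin n, i ≤ j →
      a i - pSum n r δ i ≤ a j - pSum n r δ j ∧
      (blockNum n r δ i = blockNum n r δ j → a i - pSum n r δ i = a j - pSum n r δ j) :=
    fun i j hij => by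
    refine fin_le_induction (P := fun j => a i - pSum n r δ i ≤ a j - pSum n r δ j ∧
      (blockNum n r δ i = blockNum n r δ j → a i - pSum n r δ i = a j - pSum n r δ j))
      i ⟨le_rfl, fun _ => rfl⟩ ?_ j hij
    intro k hk hik ih
    have hst := step_of_cond h k hk
    refine ⟨ih.1.trans hst.1, fun hB => ?_⟩
    have hB' := blockNum_mono (δ := δ) hik
    rw [blockNum_succ k hk] at hB
    have hne : (δ ⟨k, by omega⟩ : ℕ) ≠ r := fun h0 => by rw [if_pos h0] at hB; omega
    rw [if_neg hne] at hB
    rw [ih.2 hB, hst.2 hne]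
  have hxm : ∀ i j : Fin n, blockNum n r δ i ≤ blockNum n r δ j →
      a i - pSum n r δ i ≤ a j - pSum n r δ j := fun i j hB => by
    rcases le_total i j with hij | hij
    · exact (hmono i j hij).1
    · exact ((hmono j i hij).2 (le_antisymm (blockNum_mono hij) hB)).ge
  have hym : ∀ i j : Fin n, pSum n r δ i = pSum n r δ j → i ≤ j →
      b i - lowB n r δ i ≤ b j - lowB n r δ j := fun i j hS hij => by
    refine fin_le_induction (P := fun j => pSum n r δ i = pSum n r δ j →
      b i - lowB n r δ i ≤ b j - lowB n r δ j) i (fun _ => le_rfl) ?_ j hij hS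
    intro k hk hik ih hS
    have h1 := pSum_mono (δ := δ) hik
    have h2 := pSum_succ (δ := δ) k hk
    have h3 : pSum n r δ ⟨k + 1, hk⟩ = pSum n r δ ⟨k, by omega⟩ := by omega
    refine (ih (by omega)).trans ?_
    have hc := (h.2.2.2.2 _ _ (isColumn_of ⟨k, by omega⟩)).2.1 ⟨k, by omega⟩ (colFirst_le rfl)
      (lt_of_lt_of_le (by simp [Fin.lt_def]) (le_colLast h3)) hk
    unfold lowB
    rw [colFirst_congr h3]
    push_cast
    linarith
  have hfirst : ∀ i, a (colFirst n r δ i) = a i := fun i => by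
    have h1 := blockNum_eq_of_pSum_eq hr _ _ (pSum_colFirst (δ := δ) i)
    have h2 := le_antisymm (hxm _ _ h1.le) (hxm _ _ h1.ge)
    rw [pSum_colFirst] at h2
    linarith
  refine ⟨fun j => ?_, fun j => ?_, hxm, fun i => ?_, fun i => ?_, hym⟩
  · have hn : 0 < n := by have := j.isLt; omega
    have h1 := (hmono ⟨0, hn⟩ j (Nat.zero_le _)).1
    have h2 := h.1 hn
    rw [pSum_zero hn] at h1
    push_cast at h1
    linarith
  · have hn : 0 < n := by have := j.isLt; omega
    have hlast : ∀ q : Fin n, q ≤ ⟨n - 1, by omega⟩ := fun q => by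
      rw [Fin.le_def]; have := q.isLt; simp; omega
    obtain ⟨i, -, hi, hmax⟩ := exists_lastBlockStart (r := r) (δ := δ) ⟨n - 1, by omega⟩
    have h1 := h.2.2.1 i hi fun q h1 h2 => absurd (hmax q h2 (hlast q)) (not_le.2 h1)
    have h2 := hxm j i (by
      rw [blockNum_eq_of_no_start i ⟨n - 1, by omega⟩ (hlast i)
        fun q h1 h3 h2 => absurd (hmax q h2 h3) (not_le.2 h1)]
      exact blockNum_mono (hlast j))
    push_cast at h1
    linarith
  · have h1 := (h.2.2.2.2 _ _ (isColumn_of i)).1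
    have h2 := hym _ _ (pSum_colFirst i) (colFirst_le rfl)
    have h3 : lowB n r δ (colFirst n r δ i) = Lstat n r δ (colFirst n r δ i) := by
      unfold lowB
      rw [colFirst_congr (pSum_colFirst i)]
      ring
    linarith
  · have h1 := (h.2.2.2.2 _ _ (isColumn_of i)).2.2
    have h2 := hym _ _ (pSum_colLast i).symm (le_colLast rfl)
    rw [hfirst] at h1
    refine h2.trans ?_
    unfold lowB colGap
    rw [colFirst_congr (pSum_colLast i)]
    linarith

lemma cond_of_normal (hr : 1 ≤ r) {a b : Fin n → ℝ}
    (h : NormalP n r s d1 d2 δ (fun j => a j - pSum n r δ j) (fun i => b i - lowB n r δ i)) :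
    PdeltaCondR n r s d1 d2 δ a b := by
  obtain ⟨h1, h2, h3, h4, h5, h6⟩ := h
  refine ⟨fun hn => ?_, fun p p' _ _ hlt _ => ?_, fun p _ _ => ?_, fun j hj i hi hij hmax => ?_,
    fun j j' hc => ⟨?_, fun k hjk hkj hk => ?_, ?_⟩⟩
  · have := h1 ⟨0, hn⟩
    rw [pSum_zero hn] at this
    simpa using this
  · have := h3 p p' (blockNum_mono hlt.le)
    push_cast
    linarith
  · have := h2 p
    push_cast
    linarith
  · have hB : blockNum n r δ i = blockNum n r δ j :=
      blockNum_eq_of_no_start i j hij.le fun q hq1 hq2 hq => by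
        have hne : q ≠ j := fun he => hj (he ▸ hq)
        exact absurd (hmax q hq (lt_of_le_of_ne hq2 hne)) (not_le.2 hq1)
    have := le_antisymm (h3 i j hB.le) (h3 j i hB.ge)
    push_cast
    linarith
  · have := h4 j
    unfold lowB at this
    rw [((isColumn_iff _ _).1 hc).1] at this
    linarith
  · have hk1 : (⟨k + 1, hk⟩ : Fin n) ≤ j' := hkj
    have hk0 : k ≤ (⟨k + 1, hk⟩ : Fin n) := by simp [Fin.le_def]
    have hS := (hc.pSum_eq hjk hkj.le).trans (hc.pSum_eq (hjk.trans hk0) hk1).symm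
    have := h6 _ _ hS hk0
    unfold lowB at this
    rw [colFirst_congr hS] at this
    push_cast at this
    linarith
  · have hjj : j ≤ j' := hc.1
    have hS := hc.pSum_eq hjj le_rfl
    have hB := blockNum_eq_of_pSum_eq hr _ _ hS
    have h7 := le_antisymm (h3 _ _ hB.le) (h3 _ _ hB.ge)
    have h8 := h5 j'
    rw [h7] at h8
    unfold lowB colGap at h8
    rw [hc.first_eq hjj le_rfl, hc.last_eq hjj le_rfl, hS] at h8
    linarith

lemma mem_PdeltaR_iff (hr : 1 ≤ r) (p : (Fin n → ℝ) × (Fin n → ℝ)) :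
    p ∈ PdeltaR n r s d1 d2 δ ↔
      NormalP n r s d1 d2 δ (fun j => p.1 j - pSum n r δ j) (fun i => p.2 i - lowB n r δ i) :=
  ⟨normal_of_cond hr, cond_of_normal hr⟩

/-- In normal coordinates a vertex has every `x_j` at one end of `[0, d_1 - |δ|]` and every
`y_i` at one end of its range. -/
lemma isVtx_iff (hr : 1 ≤ r) (m : ℕ) (w : Fin n → ℕ) (p : (Fin n → ℝ) × (Fin n → ℝ)) :
    IsVtx n r s d1 d2 δ m w p ↔
      (∀ j, p.1 j - pSum n r δ j = if blockNum n r δ j ≤ m then 0 else (d1 : ℝ) - delTotal n r δ) ∧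
      (∀ i, p.2 i - lowB n r δ i =
        if (i : ℕ) < (colFirst n r δ i : ℕ) + w (colFirst n r δ i) then 0
        else colGap n r s d2 δ i + s * (p.1 i - pSum n r δ i)) := by
  unfold IsVtx
  have hx : (∀ j : Fin n,
      (blockNum n r δ j ≤ m → p.1 j = ((pSum n r δ j : ℤ) : ℝ)) ∧
      (m < blockNum n r δ j →
        p.1 j = (d1 : ℝ) - ((delTotal n r δ - pSum n r δ j : ℤ) : ℝ))) ↔
      (∀ j, p.1 j - pSum n r δ j =
        if blockNum n r δ j ≤ m then 0 else (d1 : ℝ) - delTotal n r δ) := by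
    refine forall_congr' fun j => ?_
    push_cast
    split_ifs with hj
    · simp only [hj, not_lt.2 hj, true_imp_iff, false_imp_iff, and_true, sub_eq_zero]
    · simp only [hj, not_le.1 hj, true_imp_iff, false_imp_iff, true_and]
      constructor <;> intro h <;> linarith
  rw [hx]
  refine and_congr_right fun hx => ?_
  have hfirst : ∀ i, p.1 (colFirst n r δ i) = p.1 i := fun i => by
    have h1 := hx i
    have h2 := hx (colFirst n r δ i)
    rw [blockNum_eq_of_pSum_eq hr _ _ (pSum_colFirst i), ← h1, pSum_colFirst] at h2
    linarith
  constructor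
  · intro h i
    have h1 := h _ _ (isColumn_of i) i (colFirst_le rfl) (le_colLast rfl)
    rw [hfirst] at h1
    unfold lowB colGap
    split_ifs with hi
    · rw [h1.1 hi]; ring
    · rw [h1.2 (not_lt.1 hi)]; ring
  · intro h j j' hc i hji hij
    have h1 := h i
    have h2 := hfirst i
    unfold lowB colGap at h1
    rw [hc.first_eq hji hij] at h2
    rw [hc.first_eq hji hij, hc.last_eq hji hij] at h1
    constructor <;> intro hi
    · rw [if_pos hi] at h1; linarith
    · rw [if_neg (not_lt.2 hi)] at h1; rw [h2]; linarith

end Translation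

/-! ### Vertices and extreme points -/

section Vertices

variable {n r : ℕ} {δ : Fin (n - 1) → Fin (r + 1)} {s d1 d2 : ℤ}

lemma existsUnique_isVtx (hr : 1 ≤ r) (m : ℕ) (w : Fin n → ℕ) :
    ∃! p : (Fin n → ℝ) × (Fin n → ℝ), IsVtx n r s d1 d2 δ m w p := by
  let X : Fin n → ℝ := fun j =>
    pSum n r δ j + if blockNum n r δ j ≤ m then 0 else (d1 : ℝ) - delTotal n r δ
  let Y : Fin n → ℝ := fun i => lowB n r δ i +
    if (i : ℕ) < (colFirst n r δ i : ℕ) + w (colFirst n r δ i) then 0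
      else colGap n r s d2 δ i + s * (X i - pSum n r δ i)
  refine ⟨(X, Y), (isVtx_iff hr m w _).2 ⟨fun j => add_sub_cancel_left _ _,
    fun i => add_sub_cancel_left _ _⟩, fun q hq => ?_⟩
  obtain ⟨h1, h2⟩ := (isVtx_iff hr m w _).1 hq
  have hX : q.1 = X := funext fun j => sub_eq_iff_eq_add'.1 (h1 j)
  have hY : q.2 = Y := funext fun i => by
    have := sub_eq_iff_eq_add'.1 (h2 i)
    rw [hX] at this
    exact this
  exact Prod.ext hX hY

lemma normal_of_isVtx (hn : 1 ≤ n) (hs : 0 ≤ s) (hr : 1 ≤ r)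
    (hd1 : (r : ℤ) * ((n : ℤ) - 1) < d1) (hd2 : (r : ℤ) * ((n : ℤ) - 1) < d2)
    {m : ℕ} {w : Fin n → ℕ} {p : (Fin n → ℝ) × (Fin n → ℝ)} (h : IsVtx n r s d1 d2 δ m w p) :
    NormalP n r s d1 d2 δ (fun j => p.1 j - pSum n r δ j) (fun i => p.2 i - lowB n r δ i) := by
  obtain ⟨h1, h2⟩ := (isVtx_iff hr m w _).1 h
  have hD : 0 < (d1 : ℝ) - delTotal n r δ := xRange_pos hn hd1
  have hs' : (0 : ℝ) ≤ s := by exact_mod_cast hs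
  have hx0 : ∀ j, 0 ≤ p.1 j - pSum n r δ j := fun j => by
    rw [h1]; split_ifs <;> linarith
  have hU : ∀ i, 0 < colGap n r s d2 δ i + s * (p.1 i - pSum n r δ i) := fun i => by
    have h3 := colGap_pos (δ := δ) hs hd2 i
    have h4 := mul_nonneg hs' (hx0 i)
    linarith
  refine ⟨hx0, fun j => ?_, fun i j hij => ?_, fun i => ?_, fun i => ?_, fun i j hS hij => ?_⟩
  · rw [h1]; split_ifs <;> linarith
  · rw [h1, h1]; split_ifs <;> linarith
  · rw [h2]; split_ifs <;> linarith [hU i]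
  · rw [h2]; split_ifs <;> linarith [hU i]
  · have hx : p.1 i - pSum n r δ i = p.1 j - pSum n r δ j := by
      rw [h1, h1, blockNum_eq_of_pSum_eq hr _ _ hS]
    have hij' : (i : ℕ) ≤ (j : ℕ) := hij
    have hUj := hU j
    rw [h2, h2, hx, colGap_congr i j hS, colFirst_congr hS]
    split_ifs <;> linarith

lemma extreme_of_isVtx (hn : 1 ≤ n) (hs : 0 ≤ s) (hr : 1 ≤ r)
    (hd1 : (r : ℤ) * ((n : ℤ) - 1) < d1) (hd2 : (r : ℤ) * ((n : ℤ) - 1) < d2)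
    {m : ℕ} {w : Fin n → ℕ} {p : (Fin n → ℝ) × (Fin n → ℝ)} (h : IsVtx n r s d1 d2 δ m w p) :
    p ∈ Set.extremePoints ℝ (PdeltaR n r s d1 d2 δ) := by
  refine ⟨(mem_PdeltaR_iff hr p).2 (normal_of_isVtx hn hs hr hd1 hd2 h), ?_⟩
  rintro q hq q' hq' ⟨t, t', ht, ht', htt, hmix⟩
  rw [mem_PdeltaR_iff hr] at hq hq'
  obtain ⟨h1, h2⟩ := (isVtx_iff hr m w _).1 h
  have hm1 : ∀ j, t * q.1 j + t' * q'.1 j = p.1 j := fun j => by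
    rw [← hmix]; simp
  have hm2 : ∀ j, t * q.2 j + t' * q'.2 j = p.2 j := fun j => by
    rw [← hmix]; simp
  have hx : ∀ j, q.1 j - pSum n r δ j = p.1 j - pSum n r δ j ∧
      q'.1 j - pSum n r δ j = p.1 j - pSum n r δ j := fun j => by
    refine eq_of_mix ht ht' htt (hq.x_nonneg j) (hq.x_le j) (hq'.x_nonneg j) (hq'.x_le j) ?_ ?_
    · rw [← hm1 j]
      linear_combination (-(pSum n r δ j : ℝ)) * htt
    · rw [h1]; split_ifs <;> simp
  -- The ranges of the `y`-coordinates now agree at all three points.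
  have hy : ∀ i, q.2 i - lowB n r δ i = p.2 i - lowB n r δ i := fun i => by
    have h3 := hq.y_le i
    have h4 := hq'.y_le i
    simp only [(hx i).1] at h3
    simp only [(hx i).2] at h4
    refine (eq_of_mix ht ht' htt (hq.y_nonneg i) h3 (hq'.y_nonneg i) h4 ?_ ?_).1
    · rw [← hm2 i]
      linear_combination (-(lowB n r δ i)) * htt
    · rw [h2]; split_ifs <;> simp
  exact Prod.ext (funext fun j => sub_left_injective (hx j).1)
    (funext fun i => sub_left_injective (hy i))

/-- At an extreme point every coordinate is at one end of its range. -/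
lemma ends_of_extreme (hn : 1 ≤ n) (hs : 0 ≤ s) (hr : 1 ≤ r)
    (hd1 : (r : ℤ) * ((n : ℤ) - 1) < d1) (hd2 : (r : ℤ) * ((n : ℤ) - 1) < d2)
    {p : (Fin n → ℝ) × (Fin n → ℝ)} (hp : p ∈ Set.extremePoints ℝ (PdeltaR n r s d1 d2 δ)) :
    (∀ j, p.1 j - pSum n r δ j = 0 ∨ p.1 j - pSum n r δ j = (d1 : ℝ) - delTotal n r δ) ∧
    (∀ i, p.2 i - lowB n r δ i = 0 ∨
      p.2 i - lowB n r δ i = colGap n r s d2 δ i + s * (p.1 i - pSum n r δ i)) := by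
  have hD : 0 < (d1 : ℝ) - delTotal n r δ := xRange_pos hn hd1
  have hs' : (0 : ℝ) ≤ s := by exact_mod_cast hs
  have hF : ∀ i, 0 < colGap n r s d2 δ i := colGap_pos hs hd2
  have hSB : ∀ i j, pSum n r δ i = pSum n r δ j → blockNum n r δ i = blockNum n r δ j :=
    blockNum_eq_of_pSum_eq hr
  have hN := (mem_PdeltaR_iff hr p).1 hp.1
  constructor
  · have hper := fun (e : ℝ) (he : |e| ≤ 1) => hN.perturb_x hD hs' hF hSB colGap_congr he
    have hv := eq_zero_of_mem_extremePoints hp (v :=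
      (fun j => bump ((d1 : ℝ) - delTotal n r δ) (p.1 j - pSum n r δ j),
       fun i => (p.2 i - lowB n r δ i) *
        (s * bump ((d1 : ℝ) - delTotal n r δ) (p.1 i - pSum n r δ i)) /
        (colGap n r s d2 δ i + s * (p.1 i - pSum n r δ i))))
      (by
        rw [mem_PdeltaR_iff hr]
        convert hper 1 (by simp) using 2
        · simp only [Prod.fst_add, Pi.add_apply]; ring
        · simp only [Prod.snd_add, Pi.add_apply]; ring)
      (by
        rw [mem_PdeltaR_iff hr]
        convert hper (-1) (by simp) using 2
        · simp only [Prod.fst_sub, Pi.sub_apply]; ring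
        · simp only [Prod.snd_sub, Pi.sub_apply]; ring)
    exact fun j => eq_or_eq_of_bump hD (congrFun (congrArg Prod.fst hv) j)
  · have hper := fun (e : ℝ) (he : |e| ≤ 1) => hN.perturb_y hs' hF hSB colGap_congr he
    have hv := eq_zero_of_mem_extremePoints hp (v :=
      (0, fun i => bump (colGap n r s d2 δ i + s * (p.1 i - pSum n r δ i))
        (p.2 i - lowB n r δ i)))
      (by
        rw [mem_PdeltaR_iff hr]
        convert hper 1 (by simp) using 2
        · simp
        · simp only [Prod.snd_add, Pi.add_apply]; ring)
      (by
        rw [mem_PdeltaR_iff hr]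
        convert hper (-1) (by simp) using 2
        · simp
        · simp only [Prod.snd_sub, Pi.sub_apply]; ring)
    exact fun i => eq_or_eq_of_bump (hN.range_pos hs' hF i) (congrFun (congrArg Prod.snd hv) i)

lemma exists_isVtx_of_extreme (hn : 1 ≤ n) (hs : 0 ≤ s) (hr : 1 ≤ r)
    (hd1 : (r : ℤ) * ((n : ℤ) - 1) < d1) (hd2 : (r : ℤ) * ((n : ℤ) - 1) < d2)
    {p : (Fin n → ℝ) × (Fin n → ℝ)} (hp : p ∈ Set.extremePoints ℝ (PdeltaR n r s d1 d2 δ)) :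
    ∃ m : ℕ, m ≤ ellStat n r δ ∧ ∃ w : Fin n → ℕ, ValidW n r δ w ∧
      IsVtx n r s d1 d2 δ m w p := by
  classical
  obtain ⟨hx, hy⟩ := ends_of_extreme hn hs hr hd1 hd2 hp
  have hN := (mem_PdeltaR_iff hr p).1 hp.1
  -- `m` is the number of the last block on which `x` vanishes, and `w j` is the number of
  -- indices of the column of `j` up to the last one at which `y` vanishes.
  let Z : Finset (Fin n) := univ.filter fun j => p.1 j - pSum n r δ j = 0
  let W : Fin n → Finset (Fin n) := fun j =>
    univ.filter fun i => colFirst n r δ i = j ∧ p.2 i - lowB n r δ i = 0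
  refine ⟨Z.sup (blockNum n r δ), Finset.sup_le fun j _ => blockNum_le_ellStat j,
    fun j => (W j).sup fun i => (i : ℕ) - (j : ℕ) + 1, ⟨fun j j' hc => Finset.sup_le fun i hi => ?_,
      fun j hj => ?_⟩, (isVtx_iff hr _ _ _).2 ⟨fun j => ?_, fun i => ?_⟩⟩
  · obtain ⟨hi1, -⟩ := (mem_filter.1 hi).2
    obtain ⟨-, rfl⟩ := (isColumn_iff _ _).1 hc
    have h1 : i ≤ colLast n r δ j := le_colLast (by rw [← hi1, pSum_colFirst])
    have h2 : (i : ℕ) ≤ (colLast n r δ j : ℕ) := h1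
    omega
  · have : W j = ∅ := filter_eq_empty_iff.2 fun i _ hi => hj (by
      rw [colStart_iff, ← hi.1, colFirst_congr (pSum_colFirst i)])
    simp only [this, sup_empty, bot_eq_zero']
  · split_ifs with hj
    · obtain ⟨j₀, hj₀, hle⟩ := (Finset.le_sup_iff (show (⊥ : ℕ) < blockNum n r δ j from
        blockNum_pos j)).1 hj
      have h1 := hN.x_mono j j₀ hle
      have h2 : p.1 j₀ - pSum n r δ j₀ = 0 := (mem_filter.1 hj₀).2
      exact le_antisymm (h1.trans_eq h2) (hN.x_nonneg j)
    · refine (hx j).resolve_left fun h0 => hj ?_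
      exact Finset.le_sup (f := blockNum n r δ) (mem_filter.2 ⟨mem_univ j, h0⟩)
  · have hfi : (colFirst n r δ i : ℕ) ≤ (i : ℕ) := colFirst_le (δ := δ) (i := i) rfl
    split_ifs with hi
    · have hi' : (i : ℕ) - (colFirst n r δ i : ℕ) + 1 ≤ (W (colFirst n r δ i)).sup fun k =>
          (k : ℕ) - (colFirst n r δ i : ℕ) + 1 := by omega
      obtain ⟨k, hk, hle⟩ := (Finset.le_sup_iff (show (⊥ : ℕ) < _ from Nat.succ_pos _)).1 hi'
      obtain ⟨hk1, hk2⟩ := (mem_filter.1 hk).2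
      have hS : pSum n r δ i = pSum n r δ k := by
        rw [← pSum_colFirst i, ← hk1, pSum_colFirst]
      have hfk : (colFirst n r δ i : ℕ) ≤ (k : ℕ) := colFirst_le hS.symm
      have hik : i ≤ k := by rw [Fin.le_def]; omega
      exact le_antisymm ((hN.y_mono i k hS hik).trans_eq hk2) (hN.y_nonneg i)
    · refine (hy i).resolve_left fun h0 => hi ?_
      have := Finset.le_sup (f := fun k : Fin n => (k : ℕ) - (colFirst n r δ i : ℕ) + 1)
        (show i ∈ W (colFirst n r δ i) from mem_filter.2 ⟨mem_univ i, rfl, h0⟩)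
      omega

lemma m_le_of_isVtx (hn : 1 ≤ n) (hr : 1 ≤ r) (hd1 : (r : ℤ) * ((n : ℤ) - 1) < d1)
    {m m' : ℕ} {w w' : Fin n → ℕ} {p : (Fin n → ℝ) × (Fin n → ℝ)}
    (hm : m ≤ ellStat n r δ) (h : IsVtx n r s d1 d2 δ m w p)
    (h' : IsVtx n r s d1 d2 δ m' w' p) : m ≤ m' := by
  by_contra hlt
  obtain ⟨j, hj⟩ := exists_blockNum_eq (r := r) (δ := δ) hn m (by omega) hm
  have h1 := ((isVtx_iff hr m w p).1 h).1 j
  have h2 := ((isVtx_iff hr m' w' p).1 h').1 j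
  rw [if_pos hj.le] at h1
  rw [if_neg (by omega), h1] at h2
  exact (xRange_pos hn hd1).ne h2

lemma w_le_of_isVtx (hn : 1 ≤ n) (hs : 0 ≤ s) (hr : 1 ≤ r)
    (hd1 : (r : ℤ) * ((n : ℤ) - 1) < d1) (hd2 : (r : ℤ) * ((n : ℤ) - 1) < d2)
    {m m' : ℕ} {w w' : Fin n → ℕ} {p : (Fin n → ℝ) × (Fin n → ℝ)}
    (hw : ValidW n r δ w) (h : IsVtx n r s d1 d2 δ m w p)
    (h' : IsVtx n r s d1 d2 δ m' w' p) (j : Fin n) : w j ≤ w' j := by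
  by_cases hj : colStart n r δ j
  swap
  · rw [hw.2 j hj]; exact Nat.zero_le _
  by_contra hlt
  have hc : IsColumn n r δ j (colLast n r δ j) :=
    (isColumn_iff _ _).2 ⟨(colStart_iff j).1 hj, rfl⟩
  have hle := hw.1 _ _ hc
  have hjj : (j : ℕ) ≤ (colLast n r δ j : ℕ) := hc.1
  have hn' := (colLast n r δ j).isLt
  -- The first index of the column lying at the top of its range according to one description of
  -- `p`; the other description puts it at the bottom.
  let i : Fin n := ⟨(j : ℕ) + w' j, by omega⟩
  have hfi : colFirst n r δ i = j :=
    hc.first_eq (by simp [i, Fin.le_def]) (by simp only [i, Fin.le_def]; omega)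
  have h1 := ((isVtx_iff hr m w p).1 h).2 i
  have h2 := ((isVtx_iff hr m' w' p).1 h').2 i
  rw [hfi, if_pos (by simp only [i]; omega)] at h1
  rw [hfi, if_neg (by simp [i]), h1] at h2
  have hN := normal_of_isVtx hn hs hr hd1 hd2 h
  exact (hN.range_pos (by exact_mod_cast hs) (colGap_pos hs hd2) i).ne h2

end Vertices

/-- description of the vertices of `P^δ`: each choice of
`m ∈ {0,…,ℓ(δ)}` and valid `(m_k)` determines a unique point `v(m,(m_k))`; the extreme
points of `P^δ` are exactly these points; and distinct parameters give distinct points. -/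
theorem Pdelta_vertices (n : ℕ) (hn : 1 ≤ n) (s : ℤ) (hs : 0 ≤ s)
    (r : ℕ) (hr : 1 ≤ r) (δ : Fin (n - 1) → Fin (r + 1)) (d1 d2 : ℤ)
    (hd1 : (r : ℤ) * ((n : ℤ) - 1) < d1) (hd2 : (r : ℤ) * ((n : ℤ) - 1) < d2) :
    (∀ m : ℕ, m ≤ ellStat n r δ → ∀ w : Fin n → ℕ, ValidW n r δ w →
      ∃! p : (Fin n → ℝ) × (Fin n → ℝ), IsVtx n r s d1 d2 δ m w p) ∧
    Set.extremePoints ℝ (PdeltaR n r s d1 d2 δ) =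
      {p : (Fin n → ℝ) × (Fin n → ℝ) |
        ∃ m : ℕ, m ≤ ellStat n r δ ∧ ∃ w : Fin n → ℕ, ValidW n r δ w ∧
          IsVtx n r s d1 d2 δ m w p} ∧
    (∀ m m' : ℕ, ∀ w w' : Fin n → ℕ, ∀ p : (Fin n → ℝ) × (Fin n → ℝ),
      m ≤ ellStat n r δ → m' ≤ ellStat n r δ → ValidW n r δ w → ValidW n r δ w' →
      IsVtx n r s d1 d2 δ m w p → IsVtx n r s d1 d2 δ m' w' p → m = m' ∧ w = w') := by
  refine ⟨fun m _ w _ => existsUnique_isVtx hr m w, ?_, ?_⟩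
  · ext p
    constructor
    · exact exists_isVtx_of_extreme hn hs hr hd1 hd2
    · rintro ⟨m, -, w, -, h⟩
      exact extreme_of_isVtx hn hs hr hd1 hd2 h
  · intro m m' w w' p hm hm' hw hw' h h'
    exact ⟨le_antisymm (m_le_of_isVtx hn hr hd1 hm h h') (m_le_of_isVtx hn hr hd1 hm' h' h),
      funext fun j => le_antisymm
        (w_le_of_isVtx hn hs hr hd1 hd2 hw h h' j)
        (w_le_of_isVtx hn hs hr hd1 hd2 hw' h' h j)⟩

end
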